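/- arXiv:1712.02454 — 2 statements merged into one kernel-verified Lean document; each statement's English description precedes it below -/
import Mathlib

section
/- For each natural number d, let m_d denote the number of hives h for GL(4) with h_{55} = d. Then the generating function identity (Σ_{d ≥ 0} m_d t^d) · (1−t)^4 (1−t^2)^6 (1−t^12)^4 = 1 − 2t − 2t^2 + 10t^3 − 2t^4 − 24t^5 + 22t^6 + 32t^7 − 54t^8 − 18t^9 + 80t^10 − 14t^11 − 72t^12 + 34t^13 + 44t^14 − 18t^15 − 25t^16 − 18t^17 + 44t^18 + 34t^19 − 72t^20 − 14t^21 + 80t^22 − 18t^23 − 54t^24 + 32t^25 + 22t^26 − 24t^27 − 2t^28 + 10t^29 − 2t^30 − 2t^31 + t^32 holds in the ring of formal power series Z[[t]]. In particular m_0 = 1, m_1 = 2, m_2 = 6, m_3 = 14, m_4 = 34, m_5 = 68, m_6 = 142, m_7 = 268, m_8 = 508, m_9 = 902. -/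
/-- A hive for `GL(4)`, written as a tuple
`(h₁₁, h₂₁, h₂₂, h₃₁, h₃₂, h₃₃, h₄₁, h₄₂, h₄₃, h₄₄, h₅₁, h₅₂, h₅₃, h₅₄, h₅₅)`
(indices `0,...,14`): `h₁₁ = 0`, the rhombus conditions hold, and the three
boundary sequences are non-negative dominant. -/
def IsHive4 (h : Fin 15 → ℤ) : Prop :=
  h 0 = 0 ∧
  -- rhombus conditions of the first type
  h 3 + h 2 ≤ h 1 + h 4 ∧
  h 6 + h 4 ≤ h 3 + h 7 ∧
  h 7 + h 5 ≤ h 4 + h 8 ∧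
  h 10 + h 7 ≤ h 6 + h 11 ∧
  h 11 + h 8 ≤ h 7 + h 12 ∧
  h 12 + h 9 ≤ h 8 + h 13 ∧
  -- rhombus conditions of the second type
  h 4 + h 0 ≤ h 1 + h 2 ∧
  h 7 + h 1 ≤ h 3 + h 4 ∧
  h 8 + h 2 ≤ h 4 + h 5 ∧
  h 11 + h 3 ≤ h 6 + h 7 ∧
  h 12 + h 4 ≤ h 7 + h 8 ∧
  h 13 + h 5 ≤ h 8 + h 9 ∧
  -- rhombus conditions of the third type
  h 5 + h 1 ≤ h 4 + h 2 ∧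
  h 8 + h 3 ≤ h 7 + h 4 ∧
  h 9 + h 4 ≤ h 8 + h 5 ∧
  h 12 + h 6 ≤ h 11 + h 7 ∧
  h 13 + h 7 ≤ h 12 + h 8 ∧
  h 14 + h 8 ≤ h 13 + h 9 ∧
  -- boundary sequence a: (h₂₂ - h₁₁, h₃₃ - h₂₂, h₄₄ - h₃₃, h₅₅ - h₄₄)
  h 5 - h 2 ≤ h 2 - h 0 ∧ h 9 - h 5 ≤ h 5 - h 2 ∧ h 14 - h 9 ≤ h 9 - h 5 ∧ 0 ≤ h 14 - h 9 ∧
  -- boundary sequence b: (h₂₁ - h₁₁, h₃₁ - h₂₁, h₄₁ - h₃₁, h₅₁ - h₄₁)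
  h 3 - h 1 ≤ h 1 - h 0 ∧ h 6 - h 3 ≤ h 3 - h 1 ∧ h 10 - h 6 ≤ h 6 - h 3 ∧ 0 ≤ h 10 - h 6 ∧
  -- boundary sequence c: (h₅₂ - h₅₁, h₅₃ - h₅₂, h₅₄ - h₅₃, h₅₅ - h₅₄)
  h 12 - h 11 ≤ h 11 - h 10 ∧ h 13 - h 12 ≤ h 12 - h 11 ∧ h 14 - h 13 ≤ h 13 - h 12 ∧
  0 ≤ h 14 - h 13

/-- `hiveCount4 d` is the number of hives for `GL(4)` with top entry `h₅₅ = d`. -/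
noncomputable def hiveCount4 (d : ℕ) : ℕ :=
  Set.ncard {h : Fin 15 → ℤ | IsHive4 h ∧ h 14 = (d : ℤ)}

/-!
Group the eighteen rhombus inequalities by the nine lines along which rhombi of the same shape are
stacked, and add the two boundary inequalities `h₅₅ ≥ h₅₄` and `h₅₁ ≥ h₄₁`; all other dominance
inequalities follow from these. Along a line, two consecutive rhombus slacks differ by the
alternating sum of the six entries around an interior vertex. So a hive is the same as eleven free
natural numbers (the minimal slack on each line) together with a free point of `ℤ³` (the hexagon
sums at the three interior vertices). In these coordinates `h₅₅` is a positive linear form in the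
minima plus a non-negative piecewise linear function on `ℤ³`, which is linear on each cone of a
complete unimodular fan with fourteen maximal cones. Hence the generating function is a product of
eleven geometric series times a sum of fourteen products of three geometric series. Since the
denominator of the resulting rational function is invertible as a power series, its first ten
coefficients are those of the unique polynomial of degree `< 10` that solves the equation modulo
`t ^ 10`.
-/

/-! ### Weight series -/

section WeightSeries

open PowerSeries

variable {α β : Type*}

/-- A weight function all of whose values are taken only finitely often; this is what makes the
enumeration of a (possibly infinite) type by weight meaningful. -/
def HasFiniteFibers (w : α → ℕ) : Prop :=
  ∀ d, Finite {a // w a = d}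

/-- The generating function `∑ a, X ^ w a` of a type by a weight function, as the series of the
cardinalities of the fibers of `w`. An infinite fiber contributes the junk value `0`. -/
noncomputable def weightSeries (R : Type*) [Semiring R] (w : α → ℕ) : R⟦X⟧ :=
  mk fun d => (Nat.card {a // w a = d} : R)

theorem HasFiniteFibers.of_comp_equiv (e : α ≃ β) {w : β → ℕ} (hw : HasFiniteFibers (w ∘ e)) :
    HasFiniteFibers w := fun d =>
  have := hw d
  Finite.of_equiv _ (e.subtypeEquiv (p := fun a => (w ∘ e) a = d) fun _ => Iff.rfl)

theorem HasFiniteFibers.of_injective {w : α → ℕ} (hw : w.Injective) : HasFiniteFibers w := fun d =>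
  have : Subsingleton {a // w a = d} := ⟨fun a b => Subtype.ext (hw (a.2.trans b.2.symm))⟩
  inferInstance

theorem HasFiniteFibers.const_add {w : α → ℕ} (hw : HasFiniteFibers w) (c : ℕ) :
    HasFiniteFibers fun a => c + w a := fun d =>
  have := hw (d - c)
  Finite.of_injective (β := {a // w a = d - c}) (fun a => ⟨a, by lia⟩) fun a b h => by
    simpa [Subtype.ext_iff] using h

/-- The fiber of a weight function on a disjoint union is the disjoint union of the fibers. -/
def fiberSigmaEquiv {ι : Type*} {γ : ι → Type*} (w : (Σ i, γ i) → ℕ) (d : ℕ) :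
    {p // w p = d} ≃ Σ i, {c // w ⟨i, c⟩ = d} where
  toFun p := ⟨p.1.1, p.1.2, p.2⟩
  invFun p := ⟨⟨p.1, p.2.1⟩, p.2.2⟩

theorem HasFiniteFibers.sigma {ι : Type*} [Finite ι] {γ : ι → Type*} {w : (Σ i, γ i) → ℕ}
    (hw : ∀ i, HasFiniteFibers fun c => w ⟨i, c⟩) : HasFiniteFibers w := fun d =>
  have := fun i => hw i d
  Finite.of_equiv _ (fiberSigmaEquiv w d).symm

theorem hasFiniteFibers_linear {n : ℕ} {k : Fin n → ℕ} (hk : ∀ i, 0 < k i) :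
    HasFiniteFibers fun a : Fin n → ℕ => ∑ i, k i * a i := fun d => by
  refine Set.Finite.to_subtype ((Set.finite_Iic fun _ : Fin n => d).subset ?_)
  rintro a rfl i
  calc a i ≤ k i * a i := Nat.le_mul_of_pos_left _ (hk i)
    _ ≤ ∑ i, k i * a i :=
      Finset.single_le_sum (f := fun i => k i * a i) (fun _ _ => zero_le) (Finset.mem_univ i)

section Semiring

variable (R : Type*) [Semiring R]

@[simp]
theorem coeff_weightSeries (w : α → ℕ) (d : ℕ) :
    coeff d (weightSeries R w) = (Nat.card {a // w a = d} : R) :=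
  coeff_mk _ _

theorem weightSeries_comp_equiv (e : α ≃ β) (w : β → ℕ) :
    weightSeries R (w ∘ e) = weightSeries R w := by
  ext d
  simp only [coeff_weightSeries]
  exact congrArg Nat.cast (Nat.card_congr (e.subtypeEquiv fun _ => Iff.rfl))

theorem weightSeries_const_add (c : ℕ) (w : α → ℕ) :
    weightSeries R (fun a => c + w a) = X ^ c * weightSeries R w := by
  ext d
  rw [coeff_X_pow_mul', coeff_weightSeries, coeff_weightSeries]
  split_ifs with hcd
  · simp only [show ∀ a, c + w a = d ↔ w a = d - c by lia]
  · have : IsEmpty {a // c + w a = d} := ⟨fun a => hcd (a.2 ▸ Nat.le_add_right _ _)⟩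
    simp

theorem weightSeries_sigma {ι : Type*} [Fintype ι] {γ : ι → Type*} {w : (Σ i, γ i) → ℕ}
    (hw : ∀ i, HasFiniteFibers fun c => w ⟨i, c⟩) :
    weightSeries R w = ∑ i, weightSeries R fun c => w ⟨i, c⟩ := by
  ext d
  have := fun i => hw i d
  simp [Nat.card_congr (fiberSigmaEquiv w d), Nat.card_sigma]

theorem weightSeries_add {w : α → ℕ} {w' : β → ℕ} (hw : HasFiniteFibers w)
    (hw' : HasFiniteFibers w') :
    weightSeries R (fun p : α × β => w p.1 + w' p.2) = weightSeries R w * weightSeries R w' := by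
  ext d
  have := fun i => hw i
  have := fun j => hw' j
  let e : {p : α × β // w p.1 + w' p.2 = d} ≃
      Σ ij : Finset.HasAntidiagonal.antidiagonal d, {a // w a = ij.1.1} × {b // w' b = ij.1.2} :=
    { toFun p := ⟨⟨(w p.1.1, w' p.1.2), by simpa using p.2⟩, ⟨p.1.1, rfl⟩, ⟨p.1.2, rfl⟩⟩
      invFun p := ⟨(p.2.1, p.2.2), by
        simpa [p.2.1.2, p.2.2.2] using Finset.HasAntidiagonal.mem_antidiagonal.1 p.1.2⟩
      right_inv := by rintro ⟨⟨⟨i, j⟩, _⟩, ⟨a, rfl : w a = i⟩, ⟨b, rfl : w' b = j⟩⟩; rfl }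
  simp only [coeff_mul, coeff_weightSeries, Nat.card_congr e, Nat.card_sigma, Nat.card_prod,
    Nat.cast_sum, Nat.cast_mul]
  exact Finset.sum_coe_sort (Finset.HasAntidiagonal.antidiagonal d) fun ij =>
    (Nat.card {a // w a = ij.1} * Nat.card {b // w' b = ij.2} : R)

end Semiring

variable (R : Type*) [CommRing R]

theorem weightSeries_const_mul_mul_one_sub_X_pow {k : ℕ} (hk : 0 < k) :
    weightSeries R (fun n : ℕ => k * n) * (1 - X ^ k) = 1 := by
  have hcard (d : ℕ) : Nat.card {n // k * n = d} = if k ∣ d then 1 else 0 := by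
    split_ifs with hd
    · obtain ⟨m, rfl⟩ := hd
      simp [hk.ne']
    · have : IsEmpty {n // k * n = d} := ⟨fun n => hd ⟨n, n.2.symm⟩⟩
      simp
  ext d
  rw [mul_sub, mul_one, map_sub, coeff_mul_X_pow', coeff_weightSeries, coeff_weightSeries, hcard,
    hcard, coeff_one]
  obtain hd | hd := lt_or_ge d k
  · have : k ∣ d ↔ d = 0 := ⟨fun h => Nat.eq_zero_of_dvd_of_lt h hd, fun h => h ▸ dvd_zero k⟩
    simp [hd.not_ge, this]
  · simp [hd, (hk.trans_le hd).ne', Nat.dvd_sub_iff_left hd dvd_rfl]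

theorem weightSeries_linear_mul_prod_one_sub_X_pow {n : ℕ} {k : Fin n → ℕ} (hk : ∀ i, 0 < k i) :
    weightSeries R (fun a : Fin n → ℕ => ∑ i, k i * a i) * ∏ i, (1 - X ^ k i) = 1 := by
  induction n with
  | zero =>
    ext d
    obtain rfl | hd := eq_or_ne d 0
    · simp
    · simp [coeff_one, hd, hd.symm]
  | succ n ih =>
    have hw : HasFiniteFibers fun m : ℕ => k 0 * m :=
      HasFiniteFibers.of_injective (mul_right_injective₀ (hk 0).ne')
    have hcons : weightSeries R (fun a : Fin (n + 1) → ℕ => ∑ i, k i * a i) =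
        weightSeries R (fun m => k 0 * m) *
          weightSeries R fun a : Fin n → ℕ => ∑ i, k i.succ * a i := by
      rw [← weightSeries_add R hw
          (hasFiniteFibers_linear fun i => hk i.succ),
        ← weightSeries_comp_equiv R (Fin.consEquiv fun _ => ℕ)]
      simp [Function.comp_def, Fin.consEquiv, Fin.sum_univ_succ]
    rw [hcons, Fin.prod_univ_succ, mul_mul_mul_comm,
      weightSeries_const_mul_mul_one_sub_X_pow R (hk 0), ih fun i => hk i.succ, one_mul]

end WeightSeries

/-! ### Line minima and hexagon sums of a hive -/

/-- The slack of the first rhombus on each of the nine lines of parallel rhombi of a triangular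
array (three directions, with one, two and three rhombi on a line), followed by the two boundary
differences `h₅₅ - h₅₄` and `h₅₁ - h₄₁`. -/
def baseSlack (h : Fin 15 → ℤ) : Fin 11 → ℤ :=
  ![h 6 + h 11 - h 10 - h 7, h 3 + h 7 - h 6 - h 4, h 1 + h 4 - h 3 - h 2,
    h 1 + h 2 - h 4 - h 0, h 4 + h 5 - h 8 - h 2, h 8 + h 9 - h 13 - h 5,
    h 13 + h 9 - h 14 - h 8, h 12 + h 8 - h 13 - h 7, h 11 + h 7 - h 12 - h 6,
    h 14 - h 13, h 10 - h 6]

/-- The alternating sums of the six entries around the interior vertices `h₄₂`, `h₃₂`, `h₄₃`. -/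
def hexagonSums (h : Fin 15 → ℤ) : ℤ × ℤ × ℤ :=
  (h 4 + h 6 + h 12 - h 3 - h 8 - h 11,
   h 2 + h 3 + h 8 - h 1 - h 5 - h 7,
   h 5 + h 7 + h 13 - h 4 - h 9 - h 12)

/-- The minimal slack on a line minus its base slack, in terms of the hexagon sums: these are the
increments between consecutive slacks, so the minimum runs over their partial sums. -/
def minOffset : ℤ × ℤ × ℤ → Fin 11 → ℤ
  | (x, y, z) => ![0, min 0 x, min 0 (min y (y + z)), 0, min 0 y, min 0 (min z (z + x)),
      0, min 0 z, min 0 (min x (x + y)), 0, 0]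

/-- The minimal rhombus slack on each of the nine lines of a triangular array, followed by the two
boundary differences of `baseSlack`. -/
def lineMin (h : Fin 15 → ℤ) : Fin 11 → ℤ := baseSlack h + minOffset (hexagonSums h)

theorem isHive4_iff {h : Fin 15 → ℤ} : IsHive4 h ↔ h 0 = 0 ∧ 0 ≤ lineMin h := by
  simp only [IsHive4, lineMin, Pi.le_def, Fin.forall_fin_succ, baseSlack, minOffset, hexagonSums,
    Pi.zero_apply, Pi.add_apply, Matrix.cons_val_zero, Matrix.cons_val_succ, IsEmpty.forall_iff,
    and_true, ← min_add_add_left, le_min_iff, add_zero]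
  refine and_congr_right fun _ => ⟨?_, ?_⟩
  · rintro ⟨r₁, r₂, r₃, r₄, r₅, r₆, s₁, s₂, s₃, s₄, s₅, s₆, t₁, t₂, t₃, t₄, t₅, t₆, _, _, _, _,
      _, _, _, b₄, _, _, _, c₄⟩
    and_intros <;> linarith
  · rintro ⟨r₄, ⟨r₂, r₅⟩, ⟨r₁, r₃, r₆⟩, s₁, ⟨s₃, s₂⟩, ⟨s₆, s₅, s₄⟩, t₆, ⟨t₅, t₃⟩, ⟨t₄, t₂, t₁⟩,
      c₄, b₄⟩
    and_intros <;> linarith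

/-- The triangular array with `h₁₁ = 0` and given base slacks and hexagon sums. The local names
are the rhombus slacks `rᵢ`, `sᵢ`, `tᵢ`, numbered as in `IsHive4` within each of the three types,
and the terms `bᵢ`, `cᵢ` of the boundary sequences. -/
def arrayOfBaseSlack (b : Fin 11 → ℤ) : ℤ × ℤ × ℤ → Fin 15 → ℤ
  | (x, y, z) =>
    let r₁ := b 2; let r₂ := b 1; let r₃ := b 2 + y
    let r₄ := b 0; let r₅ := b 1 + x; let r₆ := b 2 + y + z
    let s₁ := b 3; let s₂ := b 4 + y; let s₄ := b 5 + z + x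
    let t₄ := b 8; let t₅ := b 7; let t₆ := b 6
    let c₄ := b 9; let c₃ := c₄ + (r₆ + t₆); let c₂ := c₃ + (r₅ + t₅); let c₁ := c₂ + (r₄ + t₄)
    let b₄ := b 10; let b₃ := b₄ + (r₄ + s₄); let b₂ := b₃ + (r₂ + s₂); let b₁ := b₂ + (r₁ + s₁)
    let h₂₁ := b₁; let h₃₁ := h₂₁ + b₂; let h₄₁ := h₃₁ + b₃; let h₅₁ := h₄₁ + b₄
    let h₅₂ := h₅₁ + c₁; let h₅₃ := h₅₂ + c₂; let h₅₄ := h₅₃ + c₃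
    let h₄₂ := h₄₁ + (c₁ - r₄); let h₄₃ := h₄₂ + (c₂ - r₅)
    let h₃₂ := h₃₁ + (c₁ - r₄ - r₂); let h₃₃ := h₃₂ + (c₂ - r₅ - r₃)
    ![0, h₂₁, h₂₁ + (c₁ - r₄ - r₂ - r₁), h₃₁, h₃₂, h₃₃, h₄₁, h₄₂, h₄₃, h₄₃ + (c₃ - r₆),
      h₅₁, h₅₂, h₅₃, h₅₄, h₅₄ + c₄]

theorem baseSlack_arrayOfBaseSlack (b : Fin 11 → ℤ) (v : ℤ × ℤ × ℤ) :
    baseSlack (arrayOfBaseSlack b v) = b := by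
  ext i
  fin_cases i <;>
    simp only [arrayOfBaseSlack, baseSlack, Fin.zero_eta, Fin.mk_one, Fin.reduceFinMk,
      Matrix.cons_val] <;>
    ring

theorem hexagonSums_arrayOfBaseSlack (b : Fin 11 → ℤ) (v : ℤ × ℤ × ℤ) :
    hexagonSums (arrayOfBaseSlack b v) = v := by
  ext <;> simp only [arrayOfBaseSlack, hexagonSums, Matrix.cons_val] <;> ring

theorem arrayOfBaseSlack_baseSlack {h : Fin 15 → ℤ} (h0 : h 0 = 0) :
    arrayOfBaseSlack (baseSlack h) (hexagonSums h) = h := by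
  ext i
  fin_cases i <;>
    simp only [arrayOfBaseSlack, baseSlack, hexagonSums, h0, Fin.zero_eta, Fin.mk_one,
      Fin.reduceFinMk, Matrix.cons_val] <;>
    ring

/-- The triangular array with `h₁₁ = 0` and given line minima and hexagon sums. -/
def arrayOfLineMin (m : Fin 11 → ℤ) (v : ℤ × ℤ × ℤ) : Fin 15 → ℤ :=
  arrayOfBaseSlack (m - minOffset v) v

theorem arrayOfLineMin_zero (m : Fin 11 → ℤ) (v : ℤ × ℤ × ℤ) : arrayOfLineMin m v 0 = 0 := rfl

theorem hexagonSums_arrayOfLineMin (m : Fin 11 → ℤ) (v : ℤ × ℤ × ℤ) :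
    hexagonSums (arrayOfLineMin m v) = v :=
  hexagonSums_arrayOfBaseSlack _ _

theorem lineMin_arrayOfLineMin (m : Fin 11 → ℤ) (v : ℤ × ℤ × ℤ) :
    lineMin (arrayOfLineMin m v) = m := by
  rw [lineMin, hexagonSums_arrayOfLineMin, arrayOfLineMin, baseSlack_arrayOfBaseSlack,
    sub_add_cancel]

theorem arrayOfLineMin_lineMin {h : Fin 15 → ℤ} (h0 : h 0 = 0) :
    arrayOfLineMin (lineMin h) (hexagonSums h) = h := by
  rw [arrayOfLineMin, lineMin, add_sub_cancel_right, arrayOfBaseSlack_baseSlack h0]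

/-- The contribution to `h₅₅` of one unit of each line minimum. -/
def lineWeight : Fin 11 → ℕ := ![4, 4, 4, 1, 2, 3, 3, 2, 1, 4, 4]

/-- The contribution of the hexagon sums to `h₅₅`, that is, the value of `h₅₅` when all line
minima vanish. -/
def fanDegree (v : ℤ × ℤ × ℤ) : ℤ :=
  5 * v.1 + 5 * v.2.1 + 6 * v.2.2 - ∑ i, lineWeight i * minOffset v i

theorem arrayOfLineMin_last (m : Fin 11 → ℤ) (v : ℤ × ℤ × ℤ) :
    arrayOfLineMin m v 14 = ∑ i, lineWeight i * m i + fanDegree v := by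
  simp only [arrayOfLineMin, arrayOfBaseSlack, fanDegree, lineWeight, Fin.sum_univ_succ,
    Fin.sum_univ_zero, Matrix.cons_val, Pi.sub_apply, Matrix.cons_val_succ, Matrix.cons_val_zero]
  push_cast
  ring

theorem fanDegree_nonneg (v : ℤ × ℤ × ℤ) : 0 ≤ fanDegree v := by
  simp only [fanDegree, lineWeight, minOffset, Fin.sum_univ_succ, Fin.sum_univ_zero,
    Matrix.cons_val_succ, Matrix.cons_val_zero]
  lia

theorem isHive4_arrayOfLineMin {m : Fin 11 → ℤ} (hm : 0 ≤ m) (v : ℤ × ℤ × ℤ) :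
    IsHive4 (arrayOfLineMin m v) :=
  isHive4_iff.2 ⟨arrayOfLineMin_zero m v, (lineMin_arrayOfLineMin m v).symm ▸ hm⟩

/-- A hive is determined by its line minima and hexagon sums, which are arbitrary. -/
def hiveEquiv : (Fin 11 → ℕ) × (ℤ × ℤ × ℤ) ≃ {h // IsHive4 h} where
  toFun p :=
    ⟨arrayOfLineMin (fun i => p.1 i) p.2, isHive4_arrayOfLineMin (fun _ => Int.natCast_nonneg _) _⟩
  invFun h := (fun i => (lineMin h i).toNat, hexagonSums h)
  left_inv p := by simp only [lineMin_arrayOfLineMin, hexagonSums_arrayOfLineMin, Int.toNat_natCast]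
  right_inv h := by
    obtain ⟨h0, hmin⟩ := isHive4_iff.1 h.2
    ext1
    simp only [fun i => Int.toNat_of_nonneg (hmin i), arrayOfLineMin_lineMin h0]

theorem hiveEquiv_last (p : (Fin 11 → ℕ) × (ℤ × ℤ × ℤ)) :
    (hiveEquiv p).1 14 = (∑ i, lineWeight i * p.1 i + (fanDegree p.2).toNat : ℕ) := by
  rw [Nat.cast_add, Int.toNat_of_nonneg (fanDegree_nonneg _), Nat.cast_sum]
  exact arrayOfLineMin_last _ _

theorem mk_hiveCount4 (R : Type*) [Semiring R] :
    (PowerSeries.mk fun d => (hiveCount4 d : R)) =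
      weightSeries R fun p : (Fin 11 → ℕ) × (ℤ × ℤ × ℤ) =>
        ∑ i, lineWeight i * p.1 i + (fanDegree p.2).toNat := by
  ext d
  rw [PowerSeries.coeff_mk, coeff_weightSeries, hiveCount4, ← Nat.card_coe_set_eq]
  congr 1
  refine Nat.card_congr ((Equiv.subtypeSubtypeEquivSubtypeInter _ _).symm.trans
    (hiveEquiv.subtypeEquiv fun p => ?_).symm)
  rw [hiveEquiv_last, Nat.cast_inj]

/-! ### A fan decomposition of `ℤ³` -/

/-- Affine parametrizations by `ℕ³` of fourteen disjoint half-open cones that cover `ℤ³`. Their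
closures are the maximal cones of the complete unimodular fan with rays `±e₁`, `±e₂`, `±e₃`,
`e₃ - e₁`, `e₁ - e₂`, `e₂ - e₃`. A coordinate that must be negative is written `-1 - a`, which
is what makes the cones disjoint. -/
def conePoint (k : Fin 14) (n : Fin 3 → ℤ) : ℤ × ℤ × ℤ :=
  let a := n 0; let b := n 1; let c := n 2
  ![(a, b, c),
    (-1 - a, b, a + 1 + c), (-1 - a - c, b, c),
    (a + b + 1, -1 - b, c), (a, -1 - a - b, c),
    (a, b + c + 1, -1 - c), (a, b, -1 - b - c),
    (-1 - a, -1 - b, a + 1 + c), (-1 - a - c, -1 - b, c),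
    (a + b + 1, -1 - b, -1 - c), (a, -1 - a - b, -1 - c),
    (-1 - a, b + c + 1, -1 - c), (-1 - a, b, -1 - b - c),
    (-1 - a, -1 - b, -1 - c)] k

/-- The coordinates of a point in the parametrization `conePoint k`; they are all non-negative
exactly when the point lies in the `k`-th cone. -/
def coneCoord (k : Fin 14) : ℤ × ℤ × ℤ → Fin 3 → ℤ
  | (x, y, z) =>
    ![![x, y, z],
      ![-1 - x, y, z + x], ![-1 - (z + x), y, z],
      ![x + y, -1 - y, z], ![x, -1 - (x + y), z],
      ![x, y + z, -1 - z], ![x, y, -1 - (y + z)],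
      ![-1 - x, -1 - y, z + x], ![-1 - (z + x), -1 - y, z],
      ![x + y, -1 - y, -1 - z], ![x, -1 - (x + y), -1 - z],
      ![-1 - x, y + z, -1 - z], ![-1 - x, y, -1 - (y + z)],
      ![-1 - x, -1 - y, -1 - z]] k

/-- The index of the half-open cone that contains a given point. -/
def coneIndex : ℤ × ℤ × ℤ → Fin 14
  | (x, y, z) =>
    if 0 ≤ x then
      if 0 ≤ y then
        if 0 ≤ z then 0 else if 0 ≤ y + z then 5 else 6
      else if 0 ≤ z then
        if 0 ≤ x + y then 3 else 4
      else if 0 ≤ x + y then 9 else 10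
    else if 0 ≤ y then
      if 0 ≤ z then
        if 0 ≤ z + x then 1 else 2
      else if 0 ≤ y + z then 11 else 12
    else if 0 ≤ z then
      if 0 ≤ z + x then 7 else 8
    else 13

theorem coneCoord_conePoint (k : Fin 14) (n : Fin 3 → ℤ) : coneCoord k (conePoint k n) = n := by
  ext i
  fin_cases k <;> fin_cases i <;>
    simp only [conePoint, coneCoord, Fin.zero_eta, Fin.mk_one, Fin.reduceFinMk,
      Matrix.cons_val] <;>
    ring

theorem conePoint_coneCoord (k : Fin 14) (v : ℤ × ℤ × ℤ) : conePoint k (coneCoord k v) = v := by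
  fin_cases k <;> ext <;>
    simp only [conePoint, coneCoord, Fin.zero_eta, Fin.mk_one, Fin.reduceFinMk,
      Matrix.cons_val] <;>
    ring

theorem coneCoord_coneIndex_nonneg (v : ℤ × ℤ × ℤ) : 0 ≤ coneCoord (coneIndex v) v := by
  simp only [coneIndex]
  split_ifs <;>
    simp only [Pi.le_def, Fin.forall_fin_succ, coneCoord, Pi.zero_apply, Matrix.cons_val,
      Matrix.cons_val_succ, Matrix.cons_val_zero, IsEmpty.forall_iff] <;>
    lia

theorem coneIndex_conePoint (k : Fin 14) (n : Fin 3 → ℕ) :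
    coneIndex (conePoint k fun i => n i) = k := by
  fin_cases k <;>
    simp only [conePoint, coneIndex, Fin.zero_eta, Fin.mk_one, Fin.reduceFinMk,
      Matrix.cons_val] <;>
    split_ifs <;> lia

/-- The decomposition of `ℤ³` into fourteen half-open cones, each a copy of `ℕ³`. -/
def coneEquiv : (Σ _ : Fin 14, Fin 3 → ℕ) ≃ ℤ × ℤ × ℤ where
  toFun p := conePoint p.1 fun i => p.2 i
  invFun v := ⟨coneIndex v, fun i => (coneCoord (coneIndex v) v i).toNat⟩
  left_inv p := by
    obtain ⟨k, n⟩ := p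
    simp only [coneIndex_conePoint, coneCoord_conePoint, Int.toNat_natCast]
  right_inv v := by
    simp only [fun i => Int.toNat_of_nonneg (coneCoord_coneIndex_nonneg v i),
      conePoint_coneCoord]

/-- The value of `fanDegree` at the point of each half-open cone with coordinates zero. -/
def coneShift : Fin 14 → ℕ := ![0, 6, 3, 6, 2, 4, 3, 8, 5, 9, 5, 7, 6, 8]

/-- The values of `fanDegree` on the three generators of each cone. -/
def coneWeight : Fin 14 → Fin 3 → ℕ :=
  ![![5, 5, 6], ![6, 5, 6], ![3, 5, 6], ![5, 6, 6], ![6, 2, 6], ![5, 5, 4], ![5, 4, 3], ![6, 2, 6],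
    ![3, 2, 6], ![5, 6, 3], ![6, 2, 3], ![3, 5, 4], ![3, 4, 3], ![3, 2, 3]]

theorem fanDegree_coneEquiv (p : Σ _ : Fin 14, Fin 3 → ℕ) :
    fanDegree (coneEquiv p) = (coneShift p.1 + ∑ i, coneWeight p.1 i * p.2 i : ℕ) := by
  obtain ⟨k, n⟩ := p
  rw [coneEquiv, Equiv.coe_fn_mk]
  fin_cases k <;>
    simp only [conePoint, fanDegree, coneShift, coneWeight, lineWeight, minOffset,
      Fin.sum_univ_succ, Fin.sum_univ_zero, Fin.zero_eta, Fin.mk_one, Fin.reduceFinMk,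
      Matrix.cons_val, Matrix.cons_val_succ, Matrix.cons_val_zero] <;>
    lia

theorem coneWeight_pos (k : Fin 14) (i : Fin 3) : 0 < coneWeight k i := by
  fin_cases k <;> fin_cases i <;> decide

theorem hasFiniteFibers_fanDegree : HasFiniteFibers fun v => (fanDegree v).toNat := by
  refine .of_comp_equiv coneEquiv ?_
  simp only [Function.comp_def, fanDegree_coneEquiv, Int.toNat_natCast]
  exact .sigma fun k => (hasFiniteFibers_linear (coneWeight_pos k)).const_add (coneShift k)

/-! ### The rational function -/

section RationalFunction

variable {R : Type*} [CommRing R]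

/-- The numerator of the generating function of hives, in lowest terms. -/
def hiveNumerator (x : R) : R :=
  1 - x ^ 2 + 2 * x ^ 3 + 2 * x ^ 4 + x ^ 6 + 2 * x ^ 8 + 2 * x ^ 9 - x ^ 10 + x ^ 12

/-- The denominator of the generating function of hives, in lowest terms. -/
def hiveDenominator (x : R) : R :=
  (1 - x) ^ 2 * (1 - x ^ 2) ^ 4 * (1 - x ^ 3) ^ 2 * (1 - x ^ 4) ^ 4 * (1 - x ^ 6) ^ 2

theorem hiveDenominator_mul_one_add_sq (x : R) :
    hiveDenominator x * (1 + x ^ 2) =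
      (∏ i, (1 - x ^ lineWeight i)) * ((1 - x ^ 2) * (1 - x ^ 6) ^ 2) := by
  simp only [lineWeight, Fin.prod_univ_succ, Fin.prod_univ_zero, Matrix.cons_val_zero,
    Matrix.cons_val_succ, hiveDenominator]
  ring

theorem hiveDenominator_mul_cyclotomic (x : R) :
    hiveDenominator x * ((1 - x + x ^ 2) ^ 2 * (1 - x ^ 2 + x ^ 4) ^ 4) =
      (1 - x) ^ 4 * (1 - x ^ 2) ^ 6 * (1 - x ^ 12) ^ 4 := by
  rw [hiveDenominator]
  ring

theorem hiveNumerator_mul_cyclotomic (x : R) :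
    hiveNumerator x * ((1 - x + x ^ 2) ^ 2 * (1 - x ^ 2 + x ^ 4) ^ 4) =
      1 - 2 * x - 2 * x ^ 2 + 10 * x ^ 3 - 2 * x ^ 4 - 24 * x ^ 5 + 22 * x ^ 6
        + 32 * x ^ 7 - 54 * x ^ 8 - 18 * x ^ 9 + 80 * x ^ 10 - 14 * x ^ 11
        - 72 * x ^ 12 + 34 * x ^ 13 + 44 * x ^ 14 - 18 * x ^ 15 - 25 * x ^ 16
        - 18 * x ^ 17 + 44 * x ^ 18 + 34 * x ^ 19 - 72 * x ^ 20 - 14 * x ^ 21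
        + 80 * x ^ 22 - 18 * x ^ 23 - 54 * x ^ 24 + 32 * x ^ 25 + 22 * x ^ 26
        - 24 * x ^ 27 - 2 * x ^ 28 + 10 * x ^ 29 - 2 * x ^ 30 - 2 * x ^ 31
        + x ^ 32 := by
  rw [hiveNumerator]
  ring

-- Every cone denominator divides `a₂ a₃² a₄ a₅² a₆²`, where `aⱼ = 1 - x ^ j`; the factors
-- `a₃² a₄ a₅²` cancel only in the sum of the fourteen terms.
theorem sum_pow_coneShift_mul {x : R} {w : Fin 14 → R}
    (hw : ∀ k, w k * ∏ i, (1 - x ^ coneWeight k i) = 1) :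
    (∑ k, x ^ coneShift k * w k) *
        ((1 - x ^ 2) * (1 - x ^ 6) ^ 2 * ((1 - x ^ 3) ^ 2 * (1 - x ^ 4) * (1 - x ^ 5) ^ 2)) =
      hiveNumerator x * (1 + x ^ 2) * ((1 - x ^ 3) ^ 2 * (1 - x ^ 4) * (1 - x ^ 5) ^ 2) := by
  let a (j : ℕ) : R := 1 - x ^ j
  simp only [coneWeight, Fin.forall_fin_succ, Fin.prod_univ_succ, Fin.prod_univ_zero,
    Matrix.cons_val_zero, Matrix.cons_val_succ, IsEmpty.forall_iff, and_true, mul_one,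
    show ∀ j, 1 - x ^ j = a j from fun _ => rfl] at hw
  obtain ⟨h₀, h₁, h₂, h₃, h₄, h₅, h₆, h₇, h₈, h₉, h₁₀, h₁₁, h₁₂, h₁₃⟩ := hw
  simp only [coneShift, Fin.sum_univ_succ, Fin.sum_univ_zero, Matrix.cons_val_zero,
    Matrix.cons_val_succ, hiveNumerator]
  linear_combination
    a 2 * a 3 ^ 2 * a 4 * a 6 * h₀ + x ^ 6 * (a 2 * a 3 ^ 2 * a 4 * a 5) * (h₁ + h₃) +
      a 2 * a 3 * a 4 * a 5 * a 6 * (x ^ 3 * h₂ + x ^ 9 * h₉) +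
      a 3 ^ 2 * a 4 * a 5 ^ 2 * (x ^ 2 * h₄ + x ^ 8 * h₇) +
      x ^ 4 * (a 2 * a 3 ^ 2 * a 6 ^ 2) * h₅ +
      a 2 * a 3 * a 5 * a 6 ^ 2 * (x ^ 3 * h₆ + x ^ 7 * h₁₁) +
      x ^ 5 * (a 3 * a 4 * a 5 ^ 2 * a 6) * (h₈ + h₁₀) +
      x ^ 6 * (a 2 * a 5 ^ 2 * a 6 ^ 2) * h₁₂ + x ^ 8 * (a 4 * a 5 ^ 2 * a 6 ^ 2) * h₁₃

end RationalFunction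

section GeneratingFunction

open PowerSeries

variable (R : Type*) [CommRing R]

theorem weightSeries_fanDegree :
    weightSeries R (fun v => (fanDegree v).toNat) =
      ∑ k, X ^ coneShift k * weightSeries R fun n : Fin 3 → ℕ => ∑ i, coneWeight k i * n i := by
  rw [← weightSeries_comp_equiv R coneEquiv]
  simp only [Function.comp_def, fanDegree_coneEquiv, Int.toNat_natCast]
  rw [weightSeries_sigma R fun k =>
    (hasFiniteFibers_linear (coneWeight_pos k)).const_add (coneShift k)]
  simp only [weightSeries_const_add]

theorem mk_hiveCount4_mul_hiveDenominator :
    (PowerSeries.mk fun d => (hiveCount4 d : R)) * hiveDenominator X = hiveNumerator X := by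
  have hlineWeight (i : Fin 11) : 0 < lineWeight i := by fin_cases i <;> decide
  set L : R⟦X⟧ := weightSeries R fun n : Fin 11 → ℕ => ∑ i, lineWeight i * n i
  set F : R⟦X⟧ := weightSeries R fun v => (fanDegree v).toNat
  set P : R⟦X⟧ := (1 - X ^ 3) ^ 2 * (1 - X ^ 4) * (1 - X ^ 5) ^ 2
  have hH : (PowerSeries.mk fun d => (hiveCount4 d : R)) = L * F := by
    rw [mk_hiveCount4, weightSeries_add R (hasFiniteFibers_linear hlineWeight)
      hasFiniteFibers_fanDegree]
  have hL : L * ∏ i, (1 - X ^ lineWeight i) = 1 :=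
    weightSeries_linear_mul_prod_one_sub_X_pow R hlineWeight
  have hF : F * ((1 - X ^ 2) * (1 - X ^ 6) ^ 2 * P) = hiveNumerator X * (1 + X ^ 2) * P := by
    simp only [F, weightSeries_fanDegree]
    exact sum_pow_coneShift_mul fun k =>
      weightSeries_linear_mul_prod_one_sub_X_pow R (coneWeight_pos k)
  have hunit : IsUnit ((1 + X ^ 2) * P) := by simp [P, isUnit_iff_constantCoeff]
  refine hunit.mul_right_cancel ?_
  calc
    _ = L * F * (hiveDenominator X * (1 + X ^ 2)) * P := by rw [hH]; ring
    _ = L * (∏ i, (1 - X ^ lineWeight i)) * (F * ((1 - X ^ 2) * (1 - X ^ 6) ^ 2 * P)) := by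
      rw [hiveDenominator_mul_one_add_sq]; ring
    _ = _ := by rw [hL, hF]; ring

theorem coeff_eq_of_X_pow_dvd_mul_sub {R : Type*} [CommRing R] {n : ℕ} {f g u : R⟦X⟧}
    (hu : IsUnit u) (h : X ^ n ∣ f * u - g * u) {m : ℕ} (hm : m < n) :
    coeff m f = coeff m g := by
  rw [← sub_mul, hu.dvd_mul_right] at h
  simpa [sub_eq_zero] using X_pow_dvd_iff.1 h m hm

theorem coeff_sum_natCast_mul_X_pow {R : Type*} [Semiring R] {n : ℕ} (c : Fin n → ℕ) (m : Fin n) :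
    coeff (m : ℕ) (∑ i, (c i : R⟦X⟧) * X ^ (i : ℕ) : R⟦X⟧) = c m := by
  simp only [← map_natCast (C : R →+* R⟦X⟧), map_sum, coeff_C_mul, coeff_X_pow, Fin.val_inj,
    mul_ite, mul_one, mul_zero, Finset.sum_ite_eq, Finset.mem_univ, if_true]

/-- The numbers of hives for `GL(4)` with `h₅₅ < 10`. -/
def initialHiveCounts : Fin 10 → ℕ := ![1, 2, 6, 14, 34, 68, 142, 268, 508, 902]

theorem initialHiveCounts_mul_hiveDenominator {R : Type*} [CommRing R] {x : R} (hx : x ^ 10 = 0) :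
    (∑ i, (initialHiveCounts i : R) * x ^ (i : ℕ)) * hiveDenominator x = hiveNumerator x := by
  simp only [initialHiveCounts, Fin.sum_univ_succ, Fin.sum_univ_zero, Matrix.cons_val_zero,
    Matrix.cons_val_succ, Fin.val_zero, Fin.val_succ, hiveNumerator, hiveDenominator]
  grind

theorem pow_ten_dvd_initialHiveCounts_mul_sub {R : Type*} [CommRing R] (x : R) :
    x ^ 10 ∣ (∑ i, (initialHiveCounts i : R) * x ^ (i : ℕ)) * hiveDenominator x -
      hiveNumerator x := by
  have hx : Ideal.Quotient.mk (Ideal.span {x ^ 10}) x ^ 10 = 0 := by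
    rw [← map_pow, Ideal.Quotient.eq_zero_iff_mem]
    exact Ideal.mem_span_singleton_self _
  rw [← Ideal.mem_span_singleton, ← Ideal.Quotient.eq]
  simpa [hiveNumerator, hiveDenominator, map_ofNat, hx] using
    initialHiveCounts_mul_hiveDenominator hx

theorem hiveCount4_eq_initialHiveCounts (m : Fin 10) : hiveCount4 m = initialHiveCounts m := by
  have hunit : IsUnit (hiveDenominator X : ℤ⟦X⟧) := by
    simp [hiveDenominator, isUnit_iff_constantCoeff]
  have hdvd := pow_ten_dvd_initialHiveCounts_mul_sub (X : ℤ⟦X⟧)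
  rw [← mk_hiveCount4_mul_hiveDenominator] at hdvd
  have hcoeff := coeff_eq_of_X_pow_dvd_mul_sub hunit hdvd m.2
  rw [coeff_sum_natCast_mul_X_pow, coeff_mk] at hcoeff
  exact_mod_cast hcoeff.symm

end GeneratingFunction

open PowerSeries in
/-- The generating function of the numbers of hives for `GL(4)` with `h₅₅ = d`
satisfies `(Σ m_d t^d) (1-t)⁴ (1-t²)⁶ (1-t¹²)⁴ = f(t)` for the explicit palindromic
polynomial `f` of degree 32; in particular
`m₀, ..., m₉ = 1, 2, 6, 14, 34, 68, 142, 268, 508, 902`. -/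
theorem hiveCount4_generating_function :
    (PowerSeries.mk fun d => (hiveCount4 d : ℤ)) *
      ((1 - X) ^ 4 * (1 - X ^ 2) ^ 6 * (1 - X ^ 12) ^ 4) =
      1 - 2 * X - 2 * X ^ 2 + 10 * X ^ 3 - 2 * X ^ 4 - 24 * X ^ 5 + 22 * X ^ 6
        + 32 * X ^ 7 - 54 * X ^ 8 - 18 * X ^ 9 + 80 * X ^ 10 - 14 * X ^ 11
        - 72 * X ^ 12 + 34 * X ^ 13 + 44 * X ^ 14 - 18 * X ^ 15 - 25 * X ^ 16
        - 18 * X ^ 17 + 44 * X ^ 18 + 34 * X ^ 19 - 72 * X ^ 20 - 14 * X ^ 21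
        + 80 * X ^ 22 - 18 * X ^ 23 - 54 * X ^ 24 + 32 * X ^ 25 + 22 * X ^ 26
        - 24 * X ^ 27 - 2 * X ^ 28 + 10 * X ^ 29 - 2 * X ^ 30 - 2 * X ^ 31
        + X ^ 32 ∧
    hiveCount4 0 = 1 ∧ hiveCount4 1 = 2 ∧ hiveCount4 2 = 6 ∧ hiveCount4 3 = 14 ∧
    hiveCount4 4 = 34 ∧ hiveCount4 5 = 68 ∧ hiveCount4 6 = 142 ∧ hiveCount4 7 = 268 ∧
    hiveCount4 8 = 508 ∧ hiveCount4 9 = 902 := by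
  have hcount := hiveCount4_eq_initialHiveCounts
  refine ⟨?_, hcount 0, hcount 1, hcount 2, hcount 3, hcount 4, hcount 5, hcount 6, hcount 7,
    hcount 8, hcount 9⟩
  rw [← hiveDenominator_mul_cyclotomic, ← mul_assoc, mk_hiveCount4_mul_hiveDenominator,
    hiveNumerator_mul_cyclotomic]
end

section
/- The five polynomials g_1 = det [[y_{11}, y_{12}], [y_{21}, y_{22}]], g_2 = det [[x_{11}, y_{11}], [x_{21}, y_{21}]], g_3 = x_{11}, g_4 = det [[x_{11}, x_{12}], [x_{21}, x_{22}]], g_5 = y_{11} in the polynomial ring C[x_{ab}, y_{ab} : 1 ≤ a, b ≤ 2] are algebraically independent over C. Consequently TA(2) is isomorphic as a C-algebra to a polynomial algebra in five indeterminates. -/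
open MvPolynomial

/-- The polynomial ring `ℂ[M_n ⊕ M_n]` in the variables `x_{ab}` (indexed by
`Sum.inl (a, b)`) and `y_{ab}` (indexed by `Sum.inr (a, b)`), `1 ≤ a, b ≤ n`. -/
abbrev MV (n : ℕ) := MvPolynomial ((Fin n × Fin n) ⊕ (Fin n × Fin n)) ℂ

/-- `g` is upper triangular with all diagonal entries equal to `1`. -/
def IsUniUpper {n : ℕ} (g : Matrix (Fin n) (Fin n) ℂ) : Prop :=
  (∀ i, g i i = 1) ∧ ∀ i j : Fin n, j < i → g i j = 0

/-- The action of `(g₁, g₂, g₃) ∈ GL(n)³` on `ℂ[M_n ⊕ M_n]`, given by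
`(g·f)(m₁, m₂) = f(g₁ᵀ m₁ g₂, g₁ᵀ m₂ g₃)`: it substitutes for `x_{ab}` the
`(a,b)` entry of `g₁ᵀ X g₂` and for `y_{ab}` the `(a,b)` entry of `g₁ᵀ Y g₃`. -/
noncomputable def act (n : ℕ) (g1 g2 g3 : Matrix (Fin n) (Fin n) ℂ) : MV n →ₐ[ℂ] MV n :=
  aeval (Sum.elim
    (fun p : Fin n × Fin n => ∑ c : Fin n, ∑ d : Fin n,
      C (g1 c p.1) * C (g2 d p.2) * X (Sum.inl (c, d)))
    (fun p : Fin n × Fin n => ∑ c : Fin n, ∑ d : Fin n,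
      C (g1 c p.1) * C (g3 d p.2) * X (Sum.inr (c, d))))

/-- The tensor product algebra `TA(n)`: the subalgebra of `ℂ[M_n ⊕ M_n]` of
polynomials invariant under `U_n × U_n × U_n`. -/
noncomputable def TA (n : ℕ) : Subalgebra ℂ (MV n) where
  carrier := {f | ∀ g1 g2 g3 : Matrix (Fin n) (Fin n) ℂ,
      IsUniUpper g1 → IsUniUpper g2 → IsUniUpper g3 → act n g1 g2 g3 f = f}
  mul_mem' := by
    intro a b ha hb g1 g2 g3 u1 u2 u3
    rw [map_mul, ha g1 g2 g3 u1 u2 u3, hb g1 g2 g3 u1 u2 u3]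
  one_mem' := by
    intro g1 g2 g3 u1 u2 u3
    rw [map_one]
  add_mem' := by
    intro a b ha hb g1 g2 g3 u1 u2 u3
    rw [map_add, ha g1 g2 g3 u1 u2 u3, hb g1 g2 g3 u1 u2 u3]
  zero_mem' := by
    intro g1 g2 g3 u1 u2 u3
    rw [map_zero]
  algebraMap_mem' := by
    intro r g1 g2 g3 u1 u2 u3
    exact (act n g1 g2 g3).commutes r

/-- The coordinate `x_{ab}` on the first matrix summand (`a b` zero-based). -/
noncomputable def xv (a b : Fin 2) : MV 2 := X (Sum.inl (a, b))

/-- The coordinate `y_{ab}` on the second matrix summand (`a b` zero-based). -/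
noncomputable def yv (a b : Fin 2) : MV 2 := X (Sum.inr (a, b))

/-- `g₁ = det [[y₁₁, y₁₂], [y₂₁, y₂₂]]`. -/
noncomputable def g1 : MV 2 := yv 0 0 * yv 1 1 - yv 0 1 * yv 1 0

/-- `g₂ = det [[x₁₁, y₁₁], [x₂₁, y₂₁]]`. -/
noncomputable def g2 : MV 2 := xv 0 0 * yv 1 0 - yv 0 0 * xv 1 0

/-- `g₃ = x₁₁`. -/
noncomputable def g3 : MV 2 := xv 0 0

/-- `g₄ = det [[x₁₁, x₁₂], [x₂₁, x₂₂]]`. -/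
noncomputable def g4 : MV 2 := xv 0 0 * xv 1 1 - xv 0 1 * xv 1 0

/-- `g₅ = y₁₁`. -/
noncomputable def g5 : MV 2 := yv 0 0

/-!
Where `x₁₁` and `y₁₁` do not vanish, every `U₂ × U₂ × U₂`-orbit on `M₂ ⊕ M₂` meets the slice
`([[a, 0], [0, *]], [[p, 0], [*, *]])` in one point, whose coordinates are Laurent monomials in
the values of `g₁, …, g₅`. Hence the `gᵢ` separate these orbits, they are algebraically
independent because the slice dominates `ℂ⁵`, and every invariant `f` satisfies
`(x₁₁ y₁₁) ^ N * f ∈ ℂ[g₁, …, g₅]` for some `N`.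

The denominators `x₁₁ = g₃` and `y₁₁ = g₅` are removed one at a time. If
`gᵢ * f = P(g₁, …, g₅)`, then `P` vanishes on the image of `{gᵢ = 0}`. For `i = 3` and `i = 5` this
image is dense in the hyperplane `zᵢ = 0` of `ℂ⁵`, so `zᵢ` divides `P`.
-/

section PolynomialMaps

variable {R σ ι : Type*}

lemma eval_aeval_eq_eval [CommSemiring R] (x : σ → R) (G : ι → MvPolynomial σ R)
    (P : MvPolynomial ι R) : eval x (aeval G P) = eval (fun i => eval x (G i)) P := by
  rw [← coe_aeval_eq_eval, ← coe_aeval_eq_eval]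
  exact comp_aeval_apply G (aeval x) P

lemma X_dvd_sub_aeval_update_zero [CommRing R] [DecidableEq ι] (i : ι) (P : MvPolynomial ι R) :
    X i ∣ P - aeval (Function.update X i (0 : MvPolynomial ι R)) P := by
  set I := Ideal.span {(X i : MvPolynomial ι R)}
  rw [← Ideal.mem_span_singleton, ← Ideal.Quotient.eq]
  suffices h : Ideal.Quotient.mkₐ R I =
      (Ideal.Quotient.mkₐ R I).comp (aeval (Function.update X i 0)) from DFunLike.congr_fun h P
  refine algHom_ext fun j => ?_
  rcases eq_or_ne j i with rfl | hj
  · simp [I]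
  · simp [hj]

variable [CommRing R] [IsDomain R] [Infinite R]

lemma eq_of_eval_eq_of_eval_ne_zero {h P Q : MvPolynomial ι R} (hh : h ≠ 0)
    (H : ∀ z, eval z h ≠ 0 → eval z P = eval z Q) : P = Q := by
  refine mul_left_cancel₀ hh (MvPolynomial.funext fun z => ?_)
  rw [map_mul, map_mul]
  by_cases hz : eval z h = 0
  · rw [hz, zero_mul, zero_mul]
  · rw [H z hz]

lemma X_dvd_of_eval_update_zero [DecidableEq ι] {i : ι} {h P : MvPolynomial ι R} (hh : h ≠ 0)
    (H : ∀ z, eval z h ≠ 0 → eval (Function.update z i 0) P = 0) : X i ∣ P := by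
  have hP : aeval (Function.update X i (0 : MvPolynomial ι R)) P = 0 := by
    refine eq_of_eval_eq_of_eval_ne_zero hh fun z hz => ?_
    have hupdate : (fun j => eval z (Function.update X i (0 : MvPolynomial ι R) j)) =
        Function.update z i 0 := by
      ext j
      rcases eq_or_ne j i with rfl | hj <;> simp [*]
    rw [eval_aeval_eq_eval, hupdate, H z hz, map_zero]
  simpa only [hP, sub_zero] using X_dvd_sub_aeval_update_zero i P

variable {G : ι → MvPolynomial σ R}

lemma algebraicIndependent_of_exists_eval_eq {h : MvPolynomial ι R} (hh : h ≠ 0)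
    (H : ∀ z, eval z h ≠ 0 → ∃ x, ∀ i, eval x (G i) = z i) : AlgebraicIndependent R G := by
  refine algebraicIndependent_iff.2 fun P hP => eq_of_eval_eq_of_eval_ne_zero hh fun z hz => ?_
  obtain ⟨x, hx⟩ := H z hz
  simpa only [eval_aeval_eq_eval, hx, map_zero] using congrArg (eval x) hP

lemma mem_adjoin_of_mul_mem_adjoin [DecidableEq ι] {i : ι} {h : MvPolynomial ι R} (hG : G i ≠ 0)
    (hh : h ≠ 0)
    (H : ∀ z, eval z h ≠ 0 → ∃ x, ∀ j, eval x (G j) = Function.update z i 0 j)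
    {f : MvPolynomial σ R} (hf : G i * f ∈ Algebra.adjoin R (Set.range G)) :
    f ∈ Algebra.adjoin R (Set.range G) := by
  rw [Algebra.adjoin_range_eq_range_aeval] at hf ⊢
  obtain ⟨P, hP⟩ := (AlgHom.mem_range _).1 hf
  have hdvd : X i ∣ P := X_dvd_of_eval_update_zero hh fun z hz => by
    obtain ⟨x, hx⟩ := H z hz
    simpa only [eval_aeval_eq_eval, map_mul, hx, Function.update_self, zero_mul] using
      congrArg (eval x) hP
  obtain ⟨Q, rfl⟩ := hdvd
  rw [map_mul, aeval_X] at hP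
  exact (AlgHom.mem_range _).2 ⟨Q, mul_left_cancel₀ hG hP⟩

end PolynomialMaps

lemma mem_of_pow_mul_mem {M : Type*} [Monoid M] {S : Set M} {a : M}
    (h : ∀ f, a * f ∈ S → f ∈ S) (N : ℕ) {f : M} (hf : a ^ N * f ∈ S) : f ∈ S := by
  induction N with
  | zero => simpa using hf
  | succ N ih => exact ih (h _ (by rwa [← mul_assoc, ← pow_succ']))

/-- A function on `ι → R` is regular on the basic open set `{d ≠ 0}` if it agrees there with a
fraction `P / d ^ N`. The denominator is cleared, so that no division in `R` is needed. -/
def IsRegularOnBasicOpen {R ι : Type*} [CommSemiring R] (d : MvPolynomial ι R)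
    (φ : (ι → R) → R) : Prop :=
  ∃ (N : ℕ) (P : MvPolynomial ι R), ∀ z, eval z d ≠ 0 → eval z d ^ N * φ z = eval z P

namespace IsRegularOnBasicOpen

variable {R σ ι : Type*}

section CommSemiring

variable [CommSemiring R] {d : MvPolynomial ι R} {φ ψ : (ι → R) → R}

lemma eval_polynomial (d P : MvPolynomial ι R) : IsRegularOnBasicOpen d fun z => eval z P :=
  ⟨0, P, fun z _ => by simp⟩

lemma add (hφ : IsRegularOnBasicOpen d φ) (hψ : IsRegularOnBasicOpen d ψ) :
    IsRegularOnBasicOpen d fun z => φ z + ψ z := by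
  obtain ⟨N, P, hP⟩ := hφ
  obtain ⟨M, Q, hQ⟩ := hψ
  refine ⟨N + M, d ^ M * P + d ^ N * Q, fun z hz => ?_⟩
  simp only [map_add, map_mul, map_pow, ← hP z hz, ← hQ z hz]
  ring

lemma mul (hφ : IsRegularOnBasicOpen d φ) (hψ : IsRegularOnBasicOpen d ψ) :
    IsRegularOnBasicOpen d fun z => φ z * ψ z := by
  obtain ⟨N, P, hP⟩ := hφ
  obtain ⟨M, Q, hQ⟩ := hψ
  refine ⟨N + M, P * Q, fun z hz => ?_⟩
  simp only [map_mul, ← hP z hz, ← hQ z hz]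
  ring

lemma eval_comp {s : (ι → R) → σ → R} (hs : ∀ j, IsRegularOnBasicOpen d fun z => s z j)
    (f : MvPolynomial σ R) : IsRegularOnBasicOpen d fun z => eval (s z) f := by
  induction f using MvPolynomial.induction_on with
  | C r => simpa using eval_polynomial d (C r)
  | add f g hf hg => simpa using hf.add hg
  | mul_X f j hf => simpa using hf.mul (hs j)

end CommSemiring

lemma div_of_dvd {k : Type*} [Field k] {d Q : MvPolynomial ι k} (h : Q ∣ d)
    (P : MvPolynomial ι k) : IsRegularOnBasicOpen d fun z => eval z P / eval z Q := by
  obtain ⟨Q', rfl⟩ := h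
  refine ⟨1, Q' * P, fun z hz => ?_⟩
  rw [map_mul] at hz
  have hQ : eval z Q ≠ 0 := left_ne_zero_of_mul hz
  simp only [map_mul]
  field_simp

lemma exists_pow_mul_mem_adjoin [CommRing R] [IsDomain R] [Infinite R] {d : MvPolynomial ι R}
    {G : ι → MvPolynomial σ R} {s : (ι → R) → σ → R}
    (hs : ∀ j, IsRegularOnBasicOpen d fun z => s z j) {f : MvPolynomial σ R}
    (hf : ∀ x, eval x (aeval G d) ≠ 0 → eval x f = eval (s fun i => eval x (G i)) f) :
    ∃ N : ℕ, aeval G d ^ N * f ∈ Algebra.adjoin R (Set.range G) := by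
  obtain ⟨N, P, hP⟩ := eval_comp hs f
  refine ⟨N + 1, ?_⟩
  rw [Algebra.adjoin_range_eq_range_aeval]
  refine (AlgHom.mem_range _).2 ⟨d * P, MvPolynomial.funext fun x => ?_⟩
  rw [map_mul, map_mul, map_mul, map_pow]
  by_cases hd : eval x (aeval G d) = 0
  · rw [hd, zero_mul, pow_succ, mul_zero, zero_mul]
  · rw [hf x hd, eval_aeval_eq_eval x G P, ← hP _ (by rwa [← eval_aeval_eq_eval]),
      ← eval_aeval_eq_eval]
    ring

end IsRegularOnBasicOpen

section MatrixPairs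

open Matrix

variable {n : ℕ}

/-- The pair of matrices `(A, B)` as a point of the affine space with coordinate ring `MV n`. -/
def matPoint {R : Type*} (A B : Matrix (Fin n) (Fin n) R) : (Fin n × Fin n) ⊕ (Fin n × Fin n) → R :=
  Sum.elim (fun p => A p.1 p.2) (fun p => B p.1 p.2)

lemma exists_matPoint_eq {R : Type*} (x : (Fin n × Fin n) ⊕ (Fin n × Fin n) → R) :
    ∃ A B : Matrix (Fin n) (Fin n) R, matPoint A B = x :=
  ⟨of fun i j => x (.inl (i, j)), of fun i j => x (.inr (i, j)), by ext (p | p) <;> rfl⟩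

lemma eval_matPoint_act (g₁ g₂ g₃ A B : Matrix (Fin n) (Fin n) ℂ) (f : MV n) :
    eval (matPoint A B) (act n g₁ g₂ g₃ f) =
      eval (matPoint (g₁ᵀ * A * g₂) (g₁ᵀ * B * g₃)) f := by
  rw [act, eval_aeval_eq_eval]
  congr 2
  ext (p | p) <;>
  · simp only [matPoint, Sum.elim_inl, Sum.elim_inr, map_sum, map_mul, eval_C, eval_X, mul_apply,
      transpose_apply, Finset.sum_mul]
    rw [Finset.sum_comm]
    exact Finset.sum_congr rfl fun _ _ => Finset.sum_congr rfl fun _ _ => by ring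

lemma mem_TA_iff {f : MV n} :
    f ∈ TA n ↔ ∀ g₁ g₂ g₃ : Matrix (Fin n) (Fin n) ℂ, IsUniUpper g₁ → IsUniUpper g₂ →
      IsUniUpper g₃ → ∀ A B, eval (matPoint (g₁ᵀ * A * g₂) (g₁ᵀ * B * g₃)) f =
        eval (matPoint A B) f := by
  refine forall₃_congr fun g₁ g₂ g₃ => forall₃_congr fun _ _ _ => ?_
  simp only [← eval_matPoint_act]
  refine ⟨fun h A B => by rw [h], fun h => MvPolynomial.funext fun x => ?_⟩
  obtain ⟨A, B, rfl⟩ := exists_matPoint_eq x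
  exact h A B

end MatrixPairs

section TwoByTwo

open Matrix

lemma isUniUpper_fin_two_iff {g : Matrix (Fin 2) (Fin 2) ℂ} :
    IsUniUpper g ↔ ∃ t, g = !![1, t; 0, 1] := by
  constructor
  · rintro ⟨hdiag, hlower⟩
    refine ⟨g 0 1, ?_⟩
    rw [eta_fin_two g, hdiag 0, hdiag 1, hlower 1 0 Fin.zero_lt_one]
    simp
  · rintro ⟨t, rfl⟩
    simp [IsUniUpper, Fin.forall_fin_two]

/-- The polynomial map `M₂ ⊕ M₂ → ℂ⁵` with components `g₁, …, g₅`. Its components are numbered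
from `0`, so `x₁₁` and `y₁₁` are the coordinates `2` and `4`. -/
def invariantMap (A B : Matrix (Fin 2) (Fin 2) ℂ) : Fin 5 → ℂ :=
  ![B.det, A 0 0 * B 1 0 - B 0 0 * A 1 0, A 0 0, A.det, B 0 0]

lemma eval_matPoint_generators (A B : Matrix (Fin 2) (Fin 2) ℂ) (i : Fin 5) :
    eval (matPoint A B) (![g1, g2, g3, g4, g5] i) = invariantMap A B i := by
  fin_cases i <;> simp [g1, g2, g3, g4, g5, xv, yv, matPoint, invariantMap, det_fin_two]

lemma invariantMap_transpose_mul_mul {g₁ g₂ g₃ : Matrix (Fin 2) (Fin 2) ℂ} (h₁ : IsUniUpper g₁)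
    (h₂ : IsUniUpper g₂) (h₃ : IsUniUpper g₃) (A B : Matrix (Fin 2) (Fin 2) ℂ) :
    invariantMap (g₁ᵀ * A * g₂) (g₁ᵀ * B * g₃) = invariantMap A B := by
  obtain ⟨r, rfl⟩ := isUniUpper_fin_two_iff.1 h₁
  obtain ⟨s, rfl⟩ := isUniUpper_fin_two_iff.1 h₂
  obtain ⟨t, rfl⟩ := isUniUpper_fin_two_iff.1 h₃
  ext i
  fin_cases i <;> simp [invariantMap, mul_apply, Fin.sum_univ_two, det_fin_two]
  ring

lemma adjoin_generators_le_TA :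
    Algebra.adjoin ℂ (Set.range ![g1, g2, g3, g4, g5]) ≤ TA 2 := by
  refine Algebra.adjoin_le (Set.range_subset_iff.2 fun i => ?_)
  refine mem_TA_iff.2 fun g₁ g₂ g₃ h₁ h₂ h₃ A B => ?_
  rw [eval_matPoint_generators, eval_matPoint_generators,
    invariantMap_transpose_mul_mul h₁ h₂ h₃]

/-- The rational section of `invariantMap` over `{z₂ z₄ ≠ 0}` whose image is the slice of pairs
`(A, B)` with `A` diagonal and `B` lower triangular. -/
noncomputable def slice (z : Fin 5 → ℂ) : (Fin 2 × Fin 2) ⊕ (Fin 2 × Fin 2) → ℂ :=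
  matPoint !![z 2, 0; 0, z 3 / z 2] !![z 4, 0; z 1 / z 2, z 0 / z 4]

lemma isRegularOnBasicOpen_slice (j : (Fin 2 × Fin 2) ⊕ (Fin 2 × Fin 2)) :
    IsRegularOnBasicOpen (X 2 * X 4) fun z => slice z j := by
  have hpoly := IsRegularOnBasicOpen.eval_polynomial (X 2 * X 4 : MvPolynomial (Fin 5) ℂ)
  have hdiv₂ (i : Fin 5) : IsRegularOnBasicOpen (X 2 * X 4) fun z : Fin 5 → ℂ => z i / z 2 := by
    simpa using IsRegularOnBasicOpen.div_of_dvd (dvd_mul_right (X 2) (X 4)) (X i)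
  have hdiv₄ (i : Fin 5) : IsRegularOnBasicOpen (X 2 * X 4) fun z : Fin 5 → ℂ => z i / z 4 := by
    simpa using IsRegularOnBasicOpen.div_of_dvd (dvd_mul_left (X 4) (X 2)) (X i)
  rcases j with ⟨a, b⟩ | ⟨a, b⟩ <;> fin_cases a <;> fin_cases b
  · simpa [slice, matPoint] using hpoly (X 2)
  · simpa [slice, matPoint] using hpoly 0
  · simpa [slice, matPoint] using hpoly 0
  · exact hdiv₂ 3
  · simpa [slice, matPoint] using hpoly (X 4)
  · simpa [slice, matPoint] using hpoly 0
  · exact hdiv₂ 1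
  · exact hdiv₄ 0

lemma exists_isUniUpper_matPoint_eq_slice {A B : Matrix (Fin 2) (Fin 2) ℂ} (hA : A 0 0 ≠ 0)
    (hB : B 0 0 ≠ 0) :
    ∃ g₁ g₂ g₃ : Matrix (Fin 2) (Fin 2) ℂ, IsUniUpper g₁ ∧ IsUniUpper g₂ ∧ IsUniUpper g₃ ∧
      matPoint (g₁ᵀ * A * g₂) (g₁ᵀ * B * g₃) = slice (invariantMap A B) := by
  have huni (t : ℂ) : IsUniUpper !![1, t; 0, 1] := isUniUpper_fin_two_iff.2 ⟨t, rfl⟩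
  refine ⟨!![1, -A 1 0 / A 0 0; 0, 1], !![1, -A 0 1 / A 0 0; 0, 1], !![1, -B 0 1 / B 0 0; 0, 1],
    huni _, huni _, huni _, ?_⟩
  ext (⟨a, b⟩ | ⟨a, b⟩) <;> fin_cases a <;> fin_cases b <;>
    simp [matPoint, slice, invariantMap, mul_apply, Fin.sum_univ_two, det_fin_two] <;>
    field_simp <;> ring

lemma eval_eq_eval_slice {f : MV 2} (hf : f ∈ TA 2) {A B : Matrix (Fin 2) (Fin 2) ℂ}
    (hA : A 0 0 ≠ 0) (hB : B 0 0 ≠ 0) :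
    eval (matPoint A B) f = eval (slice (invariantMap A B)) f := by
  obtain ⟨g₁, g₂, g₃, h₁, h₂, h₃, h⟩ := exists_isUniUpper_matPoint_eq_slice hA hB
  rw [← h, mem_TA_iff.1 hf g₁ g₂ g₃ h₁ h₂ h₃]

lemma exists_pow_mul_mem_adjoin_generators {f : MV 2} (hf : f ∈ TA 2) :
    ∃ N : ℕ, (g3 * g5) ^ N * f ∈ Algebra.adjoin ℂ (Set.range ![g1, g2, g3, g4, g5]) := by
  have hd : aeval ![g1, g2, g3, g4, g5] (X 2 * X 4 : MvPolynomial (Fin 5) ℂ) = g3 * g5 := by simp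
  rw [← hd]
  refine IsRegularOnBasicOpen.exists_pow_mul_mem_adjoin isRegularOnBasicOpen_slice fun x hx => ?_
  obtain ⟨A, B, rfl⟩ := exists_matPoint_eq x
  simp only [eval_aeval_eq_eval, eval_matPoint_generators, map_mul, eval_X] at hx ⊢
  exact eval_eq_eval_slice hf (left_ne_zero_of_mul hx) (right_ne_zero_of_mul hx)

lemma exists_invariantMap_eq_update_two {z : Fin 5 → ℂ} (h₁ : z 1 ≠ 0) (h₄ : z 4 ≠ 0) :
    ∃ A B, invariantMap A B = Function.update z 2 0 := by
  refine ⟨!![0, z 3 * z 4 / z 1; -z 1 / z 4, 0], !![z 4, 0; 0, z 0 / z 4], ?_⟩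
  ext i
  fin_cases i <;> simp [invariantMap, det_fin_two, Function.update] <;> field_simp

lemma exists_invariantMap_eq_update_four {z : Fin 5 → ℂ} (h₁ : z 1 ≠ 0) (h₂ : z 2 ≠ 0) :
    ∃ A B, invariantMap A B = Function.update z 4 0 := by
  refine ⟨!![z 2, 0; 0, z 3 / z 2], !![0, -z 0 * z 2 / z 1; z 1 / z 2, 0], ?_⟩
  ext i
  fin_cases i <;> simp [invariantMap, det_fin_two, Function.update] <;> field_simp

lemma exists_eval_generators_eq {z : Fin 5 → ℂ} (hz : ∃ A B, invariantMap A B = z) :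
    ∃ x, ∀ i, eval x (![g1, g2, g3, g4, g5] i) = z i := by
  obtain ⟨A, B, rfl⟩ := hz
  exact ⟨matPoint A B, eval_matPoint_generators A B⟩

lemma eval_slice_generators {z : Fin 5 → ℂ} (h₂ : z 2 ≠ 0) (h₄ : z 4 ≠ 0) (i : Fin 5) :
    eval (slice z) (![g1, g2, g3, g4, g5] i) = z i := by
  rw [slice, eval_matPoint_generators]
  fin_cases i <;> simp [invariantMap, det_fin_two] <;> field_simp

lemma algebraicIndependent_generators : AlgebraicIndependent ℂ ![g1, g2, g3, g4, g5] := by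
  have hh : (X 2 * X 4 : MvPolynomial (Fin 5) ℂ) ≠ 0 := mul_ne_zero (X_ne_zero _) (X_ne_zero _)
  refine algebraicIndependent_of_exists_eval_eq hh fun z hz => ?_
  simp only [map_mul, eval_X, mul_ne_zero_iff] at hz
  exact ⟨slice z, eval_slice_generators hz.1 hz.2⟩

lemma mem_adjoin_generators_of_g3_mul_mem {f : MV 2}
    (hf : g3 * f ∈ Algebra.adjoin ℂ (Set.range ![g1, g2, g3, g4, g5])) :
    f ∈ Algebra.adjoin ℂ (Set.range ![g1, g2, g3, g4, g5]) := by
  have hh : (X 1 * X 4 : MvPolynomial (Fin 5) ℂ) ≠ 0 := mul_ne_zero (X_ne_zero _) (X_ne_zero _)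
  refine mem_adjoin_of_mul_mem_adjoin (G := ![g1, g2, g3, g4, g5]) (i := 2) (X_ne_zero _) hh
    (fun z hz => exists_eval_generators_eq ?_) hf
  simp only [map_mul, eval_X, mul_ne_zero_iff] at hz
  exact exists_invariantMap_eq_update_two hz.1 hz.2

lemma mem_adjoin_generators_of_g5_mul_mem {f : MV 2}
    (hf : g5 * f ∈ Algebra.adjoin ℂ (Set.range ![g1, g2, g3, g4, g5])) :
    f ∈ Algebra.adjoin ℂ (Set.range ![g1, g2, g3, g4, g5]) := by
  have hh : (X 1 * X 2 : MvPolynomial (Fin 5) ℂ) ≠ 0 := mul_ne_zero (X_ne_zero _) (X_ne_zero _)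
  refine mem_adjoin_of_mul_mem_adjoin (G := ![g1, g2, g3, g4, g5]) (i := 4) (X_ne_zero _) hh
    (fun z hz => exists_eval_generators_eq ?_) hf
  simp only [map_mul, eval_X, mul_ne_zero_iff] at hz
  exact exists_invariantMap_eq_update_four hz.1 hz.2

lemma TA_two_eq_adjoin : TA 2 = Algebra.adjoin ℂ (Set.range ![g1, g2, g3, g4, g5]) := by
  refine le_antisymm (fun f hf => ?_) adjoin_generators_le_TA
  obtain ⟨N, hN⟩ := exists_pow_mul_mem_adjoin_generators hf
  refine mem_of_pow_mul_mem (fun p hp => ?_) N hN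
  rw [mul_assoc] at hp
  exact mem_adjoin_generators_of_g5_mul_mem (mem_adjoin_generators_of_g3_mul_mem hp)

end TwoByTwo

/-- The five polynomials `g₁, ..., g₅` are algebraically independent over `ℂ`;
consequently `TA(2)` is isomorphic as a `ℂ`-algebra to a polynomial algebra in five
indeterminates. -/
theorem TA2_algebraically_independent :
    AlgebraicIndependent ℂ ![g1, g2, g3, g4, g5] ∧
    Nonempty ((TA 2) ≃ₐ[ℂ] MvPolynomial (Fin 5) ℂ) := by
  have hind := algebraicIndependent_generators
  have heq := TA_two_eq_adjoin
  exact ⟨hind, ⟨(Subalgebra.equivOfEq _ _ heq).trans hind.aevalEquiv.symm⟩⟩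
end
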